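/- arXiv:1411.5305 — 2 statements merged into one kernel-verified Lean document; each statement's English description precedes it below -/
import Mathlib

section
/- For k ≥ 2 and u > 0, (2π)^{−k/2} ∫_{B_k(√u)} (∂⁶/∂z₁⁶) exp(−|z|²/2) dz = 15·(−2u/k + 4u²/(k(k+2)) − 2u³/(k(k+2)(k+4))) · u^{k/2−1} exp(−u/2) / (2^{k/2} Γ(k/2)). -/
open MeasureTheory Real

open Metric Module Polynomial Set

open scoped Nat

/-!
Differentiating `exp (-|z|² / 2)` six times in `z₁` multiplies it by the Hermite polynomial
`He₆(z₁)`. In polar coordinates, the standard Gaussian integral of `z₁ ^ (2j)` over the ball of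
radius `√u` is `(2j - 1)‼ * F_{k + 2j}(u)`, where `F_ν` is the chi-squared distribution function
with `ν` degrees of freedom. The coefficients of `He₂ₘ` turn these moments into `(2m - 1)‼` times
the `m`-th forward difference of `j ↦ F_{k + 2j}(u)`. Since `F_{ν + 2} = F_ν - 2 f_{ν + 2}` and
`f_{ν + 2}(u) = (u / ν) f_ν(u)` for the density `f_ν`, that difference is a multiple of `f_k(u)`.
-/

section RadialGaussian

theorem integral_Ioi_pow_mul_exp_neg_sq_div_two (n : ℕ) :
    ∫ r in Ioi (0 : ℝ), r ^ n * exp (-r ^ 2 / 2) =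
      2 ^ (((n : ℝ) - 1) / 2) * Gamma ((n + 1) / 2) := by
  have h := integral_rpow_mul_exp_neg_mul_rpow (p := 2) (q := n) (b := 2⁻¹) two_pos
    (by linarith [n.cast_nonneg (α := ℝ)]) (by positivity)
  simp only [rpow_natCast, rpow_ofNat] at h
  have hexp (r : ℝ) : -r ^ 2 / 2 = -2⁻¹ * r ^ 2 := by ring
  simp only [hexp]
  rw [h, inv_rpow zero_le_two, ← rpow_neg zero_le_two, mul_one_div, ← rpow_sub_one two_ne_zero]
  ring_nf

theorem integral_Ioi_pow_mul_exp_neg_sq_div_two_pos (n : ℕ) :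
    0 < ∫ r in Ioi (0 : ℝ), r ^ n * exp (-r ^ 2 / 2) := by
  rw [integral_Ioi_pow_mul_exp_neg_sq_div_two]
  positivity

theorem integral_pow_two_mul_mul_exp_neg_sq_div_two (j : ℕ) :
    ∫ x : ℝ, x ^ (2 * j) * exp (-x ^ 2 / 2) = (2 * j - 1)‼ * √(2 * π) := by
  have hfold : ∫ x : ℝ, x ^ (2 * j) * exp (-x ^ 2 / 2) =
      2 * ∫ r in Ioi (0 : ℝ), r ^ (2 * j) * exp (-r ^ 2 / 2) := by
    have habs := integral_comp_abs (f := fun r ↦ r ^ (2 * j) * exp (-r ^ 2 / 2))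
    simpa only [pow_mul, sq_abs] using habs
  rw [hfold, integral_Ioi_pow_mul_exp_neg_sq_div_two]
  have hj : (((2 * j : ℕ) : ℝ) + 1) / 2 = j + 1 / 2 := by push_cast; ring
  have hj' : (((2 * j : ℕ) : ℝ) - 1) / 2 = j - 1 / 2 := by push_cast; ring
  rw [hj, hj', Gamma_nat_add_half, rpow_sub two_pos, rpow_natCast, ← sqrt_eq_rpow,
    sqrt_mul zero_le_two]
  field_simp
  rw [sq_sqrt zero_le_two]

theorem intervalIntegral_pow_add_two_mul_exp_neg_sq_div_two (n : ℕ) (R : ℝ) :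
    ∫ r in 0..R, r ^ (n + 2) * exp (-r ^ 2 / 2) =
      (n + 1) * (∫ r in 0..R, r ^ n * exp (-r ^ 2 / 2)) - R ^ (n + 1) * exp (-R ^ 2 / 2) := by
  have hderiv (x : ℝ) : HasDerivAt (fun r : ℝ ↦ r ^ (n + 1) * exp (-r ^ 2 / 2))
      ((n + 1) * (x ^ n * exp (-x ^ 2 / 2)) - x ^ (n + 2) * exp (-x ^ 2 / 2)) x := by
    refine ((hasDerivAt_pow (n + 1) x).mul
      (((hasDerivAt_pow 2 x).fun_neg.div_const 2).exp)).congr_deriv ?_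
    simp only [Nat.cast_add, Nat.cast_one, Nat.cast_ofNat, Nat.add_one_sub_one, pow_one]
    ring
  have hint (m : ℕ) : IntervalIntegrable (fun r ↦ r ^ m * exp (-r ^ 2 / 2)) volume 0 R :=
    Continuous.intervalIntegrable (by fun_prop) _ _
  have ftc := intervalIntegral.integral_eq_sub_of_hasDerivAt (fun x _ ↦ hderiv x)
    (((hint n).const_mul _).sub (hint (n + 2)))
  rw [intervalIntegral.integral_sub ((hint n).const_mul _) (hint (n + 2)),
    intervalIntegral.integral_const_mul, zero_pow n.succ_ne_zero, zero_mul, sub_zero] at ftc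
  linarith

theorem integral_Ioi_pow_add_two_mul_exp_neg_sq_div_two (n : ℕ) :
    ∫ r in Ioi (0 : ℝ), r ^ (n + 2) * exp (-r ^ 2 / 2) =
      (n + 1) * ∫ r in Ioi (0 : ℝ), r ^ n * exp (-r ^ 2 / 2) := by
  have hexp : (((n + 2 : ℕ) : ℝ) - 1) / 2 = (n - 1) / 2 + 1 := by push_cast; ring
  have harg : (((n + 2 : ℕ) : ℝ) + 1) / 2 = (n + 1) / 2 + 1 := by push_cast; ring
  rw [integral_Ioi_pow_mul_exp_neg_sq_div_two, integral_Ioi_pow_mul_exp_neg_sq_div_two, hexp, harg,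
    rpow_add_one two_ne_zero, Gamma_add_one (by positivity)]
  ring

end RadialGaussian

section ChiSquared

/-- The cumulative distribution function of the chi-squared distribution with `ν` degrees of
freedom at `u`, that is, the standard Gaussian measure of the ball of radius `√u` in dimension `ν`.
It is written as an integral over the radius `r = √x`, which keeps the exponent `ν - 1` a natural
number. Meaningful only for `ν ≠ 0`, because of the truncated subtraction, and `0 ≤ u`. -/
noncomputable def chiSqCDF (ν : ℕ) (u : ℝ) : ℝ :=
  (∫ r in 0..√u, r ^ (ν - 1) * exp (-r ^ 2 / 2)) /
    ∫ r in Ioi (0 : ℝ), r ^ (ν - 1) * exp (-r ^ 2 / 2)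

/-- The density of the chi-squared distribution with `ν` degrees of freedom at `u`, of which
the ball integrals of even-order derivatives of the Gaussian are multiples. The formula is that for
the half-line `0 < u`; the value `0` elsewhere is not encoded. -/
noncomputable def chiSqPDF (ν : ℕ) (u : ℝ) : ℝ :=
  u ^ ((ν : ℝ) / 2 - 1) * exp (-u / 2) / (2 ^ ((ν : ℝ) / 2) * Gamma ((ν : ℝ) / 2))

theorem chiSqCDF_add_two {ν : ℕ} (hν : ν ≠ 0) {u : ℝ} (hu : 0 ≤ u) :
    chiSqCDF (ν + 2) u = chiSqCDF ν u - 2 * chiSqPDF (ν + 2) u := by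
  obtain ⟨n, rfl⟩ := Nat.exists_eq_add_one_of_ne_zero hν
  have hmass : 2 ^ (((n + 1 + 2 : ℕ) : ℝ) / 2) * Gamma ((n + 1 + 2 : ℕ) / 2) =
      2 * ((n + 1) * ∫ r in Ioi (0 : ℝ), r ^ n * exp (-r ^ 2 / 2)) := by
    have hexp : ((n + 1 + 2 : ℕ) : ℝ) / 2 = (((n + 2 : ℕ) : ℝ) - 1) / 2 + 1 := by push_cast; ring
    rw [← integral_Ioi_pow_add_two_mul_exp_neg_sq_div_two, integral_Ioi_pow_mul_exp_neg_sq_div_two,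
      hexp, rpow_add_one two_ne_zero]
    push_cast
    ring_nf
  have hpow : u ^ (((n + 1 + 2 : ℕ) : ℝ) / 2 - 1) = √u ^ (n + 1) := by
    rw [sqrt_eq_rpow, ← rpow_mul_natCast hu]
    push_cast
    ring_nf
  simp only [chiSqPDF, hmass, hpow, chiSqCDF, Nat.add_sub_cancel, Nat.add_right_comm n 1 2]
  rw [intervalIntegral_pow_add_two_mul_exp_neg_sq_div_two,
    integral_Ioi_pow_add_two_mul_exp_neg_sq_div_two, sub_div, mul_div_mul_left _ _ (by positivity),
    ← mul_div_assoc, mul_div_mul_left _ _ two_ne_zero, sq_sqrt hu]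

theorem chiSqPDF_add_two {ν : ℕ} (hν : ν ≠ 0) {u : ℝ} (hu : u ≠ 0) :
    chiSqPDF (ν + 2) u = u / ν * chiSqPDF ν u := by
  have hhalf : ((ν + 2 : ℕ) : ℝ) / 2 = ν / 2 + 1 := by push_cast; ring
  rw [chiSqPDF, chiSqPDF, hhalf, add_sub_cancel_right, rpow_sub_one hu, rpow_add_one two_ne_zero,
    Gamma_add_one (by positivity)]
  field_simp

theorem fwdDiff_chiSqCDF {ν : ℕ} (hν : ν ≠ 0) {u : ℝ} (hu : 0 ≤ u) :
    fwdDiff 1 (fun j : ℕ ↦ chiSqCDF (ν + 2 * j) u) =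
      fun j : ℕ ↦ -2 * chiSqPDF (ν + 2 * (j + 1)) u := by
  funext j
  rw [fwdDiff, mul_add_one, ← add_assoc, chiSqCDF_add_two (by lia) hu]
  ring

end ChiSquared

section Polar

variable {E : Type*} [NormedAddCommGroup E] [NormedSpace ℝ E] [FiniteDimensional ℝ E]
  [MeasurableSpace E] [BorelSpace E]

theorem integral_volumeIoiPow (n : ℕ) (g : ℝ → ℝ) :
    ∫ r, g r ∂Measure.volumeIoiPow n = ∫ r in Ioi (0 : ℝ), r ^ n * g r := by
  simp only [Measure.volumeIoiPow, ENNReal.ofReal]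
  rw [integral_withDensity_eq_integral_smul (by fun_prop),
    integral_subtype_comap measurableSet_Ioi fun r ↦ Real.toNNReal (r ^ n) • g r]
  refine setIntegral_congr_fun measurableSet_Ioi fun r hr ↦ ?_
  rw [NNReal.smul_def, Real.coe_toNNReal _ (pow_nonneg (le_of_lt hr) _), smul_eq_mul]

theorem integral_homogeneous_mul_fun_norm [Nontrivial E] (μ : Measure E) [μ.IsAddHaarMeasure]
    {f : E → ℝ} {d : ℕ} (hf : ∀ r > 0, ∀ x, f (r • x) = r ^ d * f x) (g : ℝ → ℝ) :
    ∫ x, f x * g ‖x‖ ∂μ =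
      (∫ θ, f θ ∂μ.toSphere) * ∫ r in Ioi (0 : ℝ), r ^ (finrank ℝ E - 1 + d) * g r :=
  calc
    ∫ x, f x * g ‖x‖ ∂μ
    _ = ∫ x : ({0}ᶜ : Set E), f x * g ‖x.1‖ ∂μ.comap (↑) := by
      rw [integral_subtype_comap (measurableSet_singleton _).compl fun x ↦ f x * g ‖x‖,
        restrict_compl_singleton]
    _ = ∫ p, f p.1 * (p.2.1 ^ d * g p.2)
          ∂μ.toSphere.prod (.volumeIoiPow (finrank ℝ E - 1)) := by
      rw [← μ.measurePreserving_homeomorphUnitSphereProd.integral_comp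
        (Homeomorph.measurableEmbedding _)]
      refine integral_congr_ae (.of_forall fun x ↦ ?_)
      have hx : 0 < ‖x.1‖ := norm_pos_iff.2 x.2
      have hfx : f x = ‖x.1‖ ^ d * f (‖x.1‖⁻¹ • x.1) := by
        rw [← hf _ hx, smul_inv_smul₀ hx.ne']
      simp only [homeomorphUnitSphereProd_apply_fst_coe, homeomorphUnitSphereProd_apply_snd_coe]
      rw [hfx]
      ring
    _ = (∫ θ, f θ ∂μ.toSphere) *
          ∫ r : Ioi (0 : ℝ), r.1 ^ d * g r ∂.volumeIoiPow (finrank ℝ E - 1) :=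
      integral_prod_mul (fun θ : sphere (0 : E) 1 ↦ f θ) fun r : Ioi (0 : ℝ) ↦ r.1 ^ d * g r
    _ = _ := by
      rw [integral_volumeIoiPow _ fun r ↦ r ^ d * g r]
      simp only [pow_add, mul_assoc]

theorem setIntegral_closedBall_homogeneous_mul_exp_neg_norm_sq [Nontrivial E] (μ : Measure E)
    [μ.IsAddHaarMeasure] {f : E → ℝ} {d : ℕ} (hf : ∀ r > 0, ∀ x, f (r • x) = r ^ d * f x)
    (u : ℝ) :
    ∫ x in closedBall 0 (√u), f x * exp (-‖x‖ ^ 2 / 2) ∂μ =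
      chiSqCDF (finrank ℝ E + d) u * ∫ x, f x * exp (-‖x‖ ^ 2 / 2) ∂μ := by
  have hdim : finrank ℝ E + d - 1 = finrank ℝ E - 1 + d := by
    have := finrank_pos (R := ℝ) (M := E)
    lia
  have hpos := integral_Ioi_pow_mul_exp_neg_sq_div_two_pos (finrank ℝ E - 1 + d)
  set S := ∫ θ, f θ ∂μ.toSphere
  have hball : ∫ x in closedBall 0 (√u), f x * exp (-‖x‖ ^ 2 / 2) ∂μ =
      S * ∫ r in 0..√u, r ^ (finrank ℝ E - 1 + d) * exp (-r ^ 2 / 2) := by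
    have hind (x : E) : (closedBall 0 (√u)).indicator (fun x ↦ f x * exp (-‖x‖ ^ 2 / 2)) x =
        f x * (Iic (√u)).indicator (fun r ↦ exp (-r ^ 2 / 2)) ‖x‖ := by
      simp [indicator]
    rw [← integral_indicator measurableSet_closedBall, funext hind,
      integral_homogeneous_mul_fun_norm μ hf, intervalIntegral.integral_of_le (sqrt_nonneg u),
      ← Ioi_inter_Iic, ← setIntegral_indicator measurableSet_Iic]
    simp only [indicator_mul_right, S]
  rw [hball, integral_homogeneous_mul_fun_norm μ hf fun r ↦ exp (-r ^ 2 / 2), chiSqCDF, hdim,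
    mul_left_comm, div_mul_cancel₀ _ hpos.ne']

end Polar

section Hermite

theorem aeval_hermite_two_mul {A : Type*} [CommRing A] (m : ℕ) (x : A) :
    aeval x (hermite (2 * m)) = ∑ j ∈ Finset.range (m + 1),
      (-1) ^ (m - j) * (2 * (m - j) - 1)‼ * (2 * m).choose (2 * j) * x ^ (2 * j) := by
  have hcoeff {j : ℕ} (hj : j ≤ m) : (hermite (2 * m)).coeff (2 * j) =
      (-1) ^ (m - j) * (2 * (m - j) - 1)‼ * (2 * m).choose (2 * j) := by
    have hdeg : 2 * (m - j) + 2 * j = 2 * m := by lia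
    simpa only [hdeg] using coeff_hermite_explicit (m - j) (2 * j)
  have hcoeff_odd {i : ℕ} (hi : Odd i) : (hermite (2 * m)).coeff i = 0 :=
    coeff_hermite_of_odd_add ((even_two_mul m).add_odd hi)
  rw [aeval_eq_sum_range, natDegree_hermite]
  symm
  refine Finset.sum_of_injOn (2 * ·) (by intro; grind) (by intro; grind) (fun i hi hi' ↦ ?_)
    fun j hj ↦ ?_
  · have hodd : Odd i := by
      rw [← Nat.not_even_iff_odd, even_iff_exists_two_mul]
      rintro ⟨a, rfl⟩
      exact hi' (mem_image_of_mem _ (Finset.mem_coe.2 (by grind)))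
    rw [hcoeff_odd hodd, zero_smul]
  · rw [hcoeff (Finset.mem_range_succ_iff.1 hj), zsmul_eq_mul]
    push_cast
    rfl

theorem factorial_two_mul_eq_doubleFactorial_mul (n : ℕ) :
    (2 * n)! = (2 * n - 1)‼ * (2 ^ n * n !) := by
  cases n with
  | zero => rfl
  | succ n =>
    rw [← Nat.doubleFactorial_two_mul]
    exact (Nat.factorial_eq_mul_doubleFactorial (2 * n + 1)).trans (mul_comm _ _)

theorem choose_two_mul_mul_doubleFactorial {m j : ℕ} (h : j ≤ m) :
    (2 * (m - j) - 1)‼ * (2 * m).choose (2 * j) * (2 * j - 1)‼ = (2 * m - 1)‼ * m.choose j := by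
  have hpos : 0 < 2 ^ m * j ! * (m - j)! := by positivity
  refine Nat.eq_of_mul_eq_mul_right hpos ?_
  have hpow : 2 ^ m = 2 ^ j * 2 ^ (m - j) := by rw [← pow_add, Nat.add_sub_cancel' h]
  have hchoose := Nat.choose_mul_factorial_mul_factorial (Nat.mul_le_mul_left 2 h)
  rw [← Nat.mul_sub, factorial_two_mul_eq_doubleFactorial_mul j,
    factorial_two_mul_eq_doubleFactorial_mul (m - j),
    factorial_two_mul_eq_doubleFactorial_mul m,
    ← Nat.choose_mul_factorial_mul_factorial h] at hchoose
  rw [hpow] at hchoose ⊢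
  linear_combination hchoose

end Hermite

section GaussianBall

variable {ι : Type*} [Fintype ι]

theorem iteratedDeriv_update_exp_neg_sum_sq [DecidableEq ι] (n : ℕ) (z : ι → ℝ) (i : ι) :
    iteratedDeriv n (fun t ↦ exp (-(∑ l, Function.update z i t l ^ 2) / 2)) (z i) =
      (-1) ^ n * aeval (z i) (hermite n) * exp (-(∑ l, z l ^ 2) / 2) := by
  set c := ∑ l ∈ Finset.univ \ {i}, z l ^ 2
  have hsum (t : ℝ) : ∑ l, Function.update z i t l ^ 2 = t ^ 2 + c := by
    rw [← Finset.sum_update_of_mem (Finset.mem_univ i)]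
    exact Finset.sum_congr rfl fun l _ ↦ Function.apply_update (fun _ y ↦ y ^ 2) z i t l
  have hexp (t : ℝ) : exp (-(t ^ 2 + c) / 2) = exp (-c / 2) * exp (-(t ^ 2 / 2)) := by
    rw [← exp_add]
    ring_nf
  have hz : ∑ l, z l ^ 2 = z i ^ 2 + c := by simpa using hsum (z i)
  simp only [hsum, hz, hexp]
  rw [iteratedDeriv_const_mul_field, iteratedDeriv_eq_iterate,
    deriv_gaussian_eq_hermite_mul_gaussian]
  ring

theorem integral_coord_pow_mul_exp_neg_norm_sq (i : ι) (j : ℕ) :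
    ∫ x : EuclideanSpace ℝ ι, x i ^ (2 * j) * exp (-‖x‖ ^ 2 / 2) =
      (2 * j - 1)‼ * (2 * π) ^ ((Fintype.card ι : ℝ) / 2) := by
  classical
  have hprod (z : ι → ℝ) : z i ^ (2 * j) * exp (-‖WithLp.toLp 2 z‖ ^ 2 / 2) =
      ∏ l, z l ^ (2 * if l = i then j else 0) * exp (-z l ^ 2 / 2) := by
    rw [Finset.prod_mul_distrib, ← exp_sum, EuclideanSpace.real_norm_sq_eq]
    simp [mul_ite, pow_ite, Finset.sum_div, neg_div]
  rw [← (PiLp.volume_preserving_toLp ι).integral_comp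
    (MeasurableEquiv.toLp 2 _).measurableEmbedding]
  simp only [hprod]
  rw [integral_fintype_prod_volume_eq_prod
    (fun l (x : ℝ) ↦ x ^ (2 * if l = i then j else 0) * exp (-x ^ 2 / 2))]
  simp only [integral_pow_two_mul_mul_exp_neg_sq_div_two, Finset.prod_mul_distrib]
  rw [Fintype.prod_eq_single i fun l hl ↦ by simp [hl], if_pos rfl, Finset.prod_const,
    Finset.card_univ, sqrt_eq_rpow, ← rpow_natCast, ← rpow_mul (by positivity)]
  ring_nf

theorem setIntegral_closedBall_coord_pow_mul_exp_neg_norm_sq (i : ι) (j : ℕ) (u : ℝ) :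
    (2 * π) ^ (-(Fintype.card ι : ℝ) / 2) *
        ∫ x : EuclideanSpace ℝ ι in closedBall 0 (√u), x i ^ (2 * j) * exp (-‖x‖ ^ 2 / 2) =
      (2 * j - 1)‼ * chiSqCDF (Fintype.card ι + 2 * j) u := by
  have : Nonempty ι := ⟨i⟩
  have hhom (r : ℝ) (_ : r > 0) (x : EuclideanSpace ℝ ι) :
      (r • x) i ^ (2 * j) = r ^ (2 * j) * x i ^ (2 * j) := by
    rw [PiLp.smul_apply, smul_eq_mul, mul_pow]
  rw [setIntegral_closedBall_homogeneous_mul_exp_neg_norm_sq volume hhom u,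
    integral_coord_pow_mul_exp_neg_norm_sq, finrank_euclideanSpace, neg_div,
    rpow_neg (by positivity)]
  field_simp

theorem integral_sum_sq_le {u : ℝ} (hu : 0 ≤ u) (f : (ι → ℝ) → ℝ) :
    ∫ z in {z | ∑ i, z i ^ 2 ≤ u}, f z =
      ∫ x : EuclideanSpace ℝ ι in closedBall 0 (√u), f x.ofLp := by
  rw [← (PiLp.volume_preserving_toLp ι).setIntegral_preimage_emb
    (MeasurableEquiv.toLp 2 _).measurableEmbedding]
  congr 2
  ext z
  simp [EuclideanSpace.norm_eq, sqrt_le_sqrt_iff hu]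

theorem integral_ball_iteratedDeriv_two_mul_gaussian [DecidableEq ι] (m : ℕ) (i : ι) {u : ℝ}
    (hu : 0 ≤ u) :
    (2 * π) ^ (-(Fintype.card ι : ℝ) / 2) *
        ∫ z in {z : ι → ℝ | ∑ l, z l ^ 2 ≤ u},
          iteratedDeriv (2 * m) (fun t ↦ exp (-(∑ l, Function.update z i t l ^ 2) / 2)) (z i) =
      (2 * m - 1)‼ * (fwdDiff 1)^[m] (fun j : ℕ ↦ chiSqCDF (Fintype.card ι + 2 * j) u) 0 := by
  simp only [iteratedDeriv_update_exp_neg_sum_sq, (even_two_mul m).neg_one_pow, one_mul,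
    aeval_hermite_two_mul, Finset.sum_mul, mul_assoc _ (_ ^ _) (exp _)]
  rw [integral_sum_sq_le hu, integral_finsetSum]
  · simp only [integral_const_mul, ← EuclideanSpace.real_norm_sq_eq]
    rw [fwdDiff_iter_eq_sum_shift, Finset.mul_sum, Finset.mul_sum]
    refine Finset.sum_congr rfl fun j hj ↦ ?_
    have hchoose := choose_two_mul_mul_doubleFactorial (Finset.mem_range_succ_iff.1 hj)
    rify at hchoose
    rw [mul_left_comm, setIntegral_closedBall_coord_pow_mul_exp_neg_norm_sq i j u, zsmul_eq_mul,
      smul_eq_mul, mul_one, zero_add]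
    push_cast
    linear_combination (-1) ^ (m - j) * chiSqCDF (Fintype.card ι + 2 * j) u * hchoose
  · intro j _
    refine ContinuousOn.integrableOn_compact (isCompact_closedBall _ _) ?_
    fun_prop

end GaussianBall

theorem stmt9_general {ι : Type*} [Fintype ι] [DecidableEq ι] (i : ι) {u : ℝ} (hu : 0 < u) :
    (2 * π) ^ (-(Fintype.card ι : ℝ) / 2) *
        ∫ z in {z : ι → ℝ | ∑ l, z l ^ 2 ≤ u},
          iteratedDeriv 6 (fun t ↦ exp (-(∑ l, Function.update z i t l ^ 2) / 2)) (z i) =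
      15 * (-(2 * u / Fintype.card ι) + 4 * u ^ 2 / (Fintype.card ι * (Fintype.card ι + 2)) -
          2 * u ^ 3 / (Fintype.card ι * (Fintype.card ι + 2) * (Fintype.card ι + 4))) *
        (u ^ ((Fintype.card ι : ℝ) / 2 - 1) * exp (-u / 2) /
          (2 ^ ((Fintype.card ι : ℝ) / 2) * Gamma ((Fintype.card ι : ℝ) / 2))) := by
  set k := Fintype.card ι
  have hk : k ≠ 0 := (Fintype.card_pos_iff.2 ⟨i⟩).ne'
  have hpdf_two : chiSqPDF (k + 2) u = u / k * chiSqPDF k u := chiSqPDF_add_two hk hu.ne'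
  have hpdf_four : chiSqPDF (k + 4) u = u / (k + 2) * chiSqPDF (k + 2) u := by
    exact_mod_cast chiSqPDF_add_two (ν := k + 2) (by lia) hu.ne'
  have hpdf_six : chiSqPDF (k + 6) u = u / (k + 4) * chiSqPDF (k + 4) u := by
    exact_mod_cast chiSqPDF_add_two (ν := k + 4) (by lia) hu.ne'
  have hdiff : (fwdDiff 1)^[3] (fun j : ℕ ↦ chiSqCDF (k + 2 * j) u) 0 =
      -2 * (chiSqPDF (k + 6) u - 2 * chiSqPDF (k + 4) u + chiSqPDF (k + 2) u) := by
    rw [Function.iterate_succ_apply, fwdDiff_chiSqCDF hk hu.le]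
    simp only [Function.iterate_succ_apply, Function.iterate_zero_apply, fwdDiff, zero_add,
      Nat.reduceAdd, Nat.reduceMul]
    ring
  have hfactor : (2 * 3 - 1)‼ = 15 := rfl
  rw [integral_ball_iteratedDeriv_two_mul_gaussian 3 i hu.le, hdiff, hpdf_six, hpdf_four, hpdf_two,
    hfactor, ← chiSqPDF]
  push_cast
  field_simp
  ring

theorem stmt9 (k : ℕ) (hk : 2 ≤ k) (u : ℝ) (hu : 0 < u) :
    (2 * Real.pi) ^ (-(k : ℝ) / 2) *
        ∫ z in {z : Fin k → ℝ | ∑ i, z i ^ 2 ≤ u},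
          iteratedDeriv 6
            (fun t => Real.exp (-(∑ i, Function.update z ⟨0, by omega⟩ t i ^ 2) / 2))
            (z ⟨0, by omega⟩) =
      15 * (-(2 * u / k) + 4 * u ^ 2 / (k * (k + 2)) -
          2 * u ^ 3 / (k * (k + 2) * (k + 4))) *
        (u ^ ((k : ℝ) / 2 - 1) * Real.exp (-u / 2) /
          (2 ^ ((k : ℝ) / 2) * Real.Gamma ((k : ℝ) / 2))) := by
  simpa only [Fintype.card_fin] using stmt9_general (⟨0, by omega⟩ : Fin k) hu
end

section
/- For k ≥ 3 and u > 0, (2π)^{−k/2} ∫_{B_k(√u)} (∂²/∂z₁²)(∂²/∂z₂²)(∂²/∂z₃²) exp(−|z|²/2) dz = (−2u/k + 4u²/(k(k+2)) − 2u³/(k(k+2)(k+4))) · u^{k/2−1} exp(−u/2) / (2^{k/2} Γ(k/2)). -/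
open MeasureTheory Real

/-!
A Gaussian vector has independent norm and direction. Hence restricting the Gaussian integral of a
homogeneous function of degree `d` on an `n`-dimensional space to a ball of radius `R` multiplies it
by `P (χ_{n+d} ≤ R)`, whatever the function is. Differentiating the Gaussian twice in each of the
coordinates `i ∈ s` produces the factor `∏ i ∈ s, (z i ^ 2 - 1)`. Expanding the product, and using
that every `∏ i ∈ t, z i ^ 2` has Gaussian mean one, turns the integral over the ball into the
forward difference of order `#s` of `j ↦ P (χ_{n+2j} ≤ R)`. Integration by parts makes the first
difference explicit, which leaves a finite difference of elementary terms.
-/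

open Set Finset Function Polynomial fwdDiff

section Chi

/-- The normalizing constant of the chi distribution with `n` degrees of freedom, whose density on
`(0, ∞)` is proportional to `r ^ (n - 1) * exp (-r ^ 2 / 2)`. Truncated subtraction makes the value
at `n = 0` the one at `n = 1`. -/
noncomputable def chiNormalization (n : ℕ) : ℝ :=
  ∫ r in Ioi (0 : ℝ), r ^ (n - 1) * exp (-r ^ 2 / 2)

/-- The cumulative distribution function at `R` of the chi distribution with `n` degrees of freedom,
the law of the norm of a standard Gaussian vector in dimension `n`. -/
noncomputable def chiCDF (n : ℕ) (R : ℝ) : ℝ :=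
  (∫ r in Ioc 0 R, r ^ (n - 1) * exp (-r ^ 2 / 2)) / chiNormalization n

theorem chiNormalization_eq {n : ℕ} (hn : 0 < n) :
    chiNormalization n = 2 ^ ((n : ℝ) / 2 - 1) * Gamma ((n : ℝ) / 2) := by
  have hcast : ((n - 1 : ℕ) : ℝ) + 1 = n := by exact_mod_cast Nat.sub_add_cancel hn
  have hgt : (-1 : ℝ) < (n - 1 : ℕ) := neg_one_lt_zero.trans_le (Nat.cast_nonneg _)
  have h := integral_rpow_mul_exp_neg_mul_rpow two_pos hgt (one_half_pos (α := ℝ))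
  have hpow : (1 / 2 : ℝ) ^ (-(n : ℝ) / 2) * (1 / 2) = 2 ^ ((n : ℝ) / 2 - 1) := by
    rw [one_div, inv_rpow zero_le_two, ← rpow_neg zero_le_two, neg_div, neg_neg,
      rpow_sub_one two_ne_zero, ← div_eq_mul_inv]
  rw [hcast, hpow] at h
  rw [← h, chiNormalization]
  simp only [rpow_natCast, rpow_two, neg_mul, one_div, neg_div, inv_mul_eq_div]

theorem chiNormalization_pos {n : ℕ} (hn : 0 < n) : 0 < chiNormalization n := by
  rw [chiNormalization_eq hn]
  have : 0 < Gamma ((n : ℝ) / 2) := Gamma_pos_of_pos (by positivity)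
  positivity

theorem chiNormalization_add_two {n : ℕ} (hn : 0 < n) :
    chiNormalization (n + 2) = n * chiNormalization n := by
  have hhalf : ((n + 2 : ℕ) : ℝ) / 2 = n / 2 + 1 := by push_cast; ring
  rw [chiNormalization_eq hn, chiNormalization_eq (by omega), hhalf,
    Gamma_add_one (by positivity), add_sub_right_comm, rpow_add_one two_ne_zero]
  ring

theorem hasDerivAt_pow_mul_gaussian (n : ℕ) (r : ℝ) :
    HasDerivAt (fun r : ℝ ↦ r ^ n * exp (-r ^ 2 / 2))
      (n * (r ^ (n - 1) * exp (-r ^ 2 / 2)) - r ^ (n + 1) * exp (-r ^ 2 / 2)) r := by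
  have hexp : HasDerivAt (fun r : ℝ ↦ exp (-r ^ 2 / 2)) (exp (-r ^ 2 / 2) * -r) r := by
    refine ((hasDerivAt_pow 2 r).fun_neg.div_const 2).exp.congr_deriv ?_
    push_cast
    ring
  exact ((hasDerivAt_pow n r).mul hexp).congr_deriv (by ring)

theorem integral_pow_add_one_mul_gaussian {n : ℕ} (hn : 0 < n) {R : ℝ} (hR : 0 ≤ R) :
    ∫ r in Ioc 0 R, r ^ (n + 1) * exp (-r ^ 2 / 2) =
      n * (∫ r in Ioc 0 R, r ^ (n - 1) * exp (-r ^ 2 / 2)) - R ^ n * exp (-R ^ 2 / 2) := by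
  have hint (m : ℕ) : IntervalIntegrable (fun r : ℝ ↦ r ^ m * exp (-r ^ 2 / 2)) volume 0 R :=
    Continuous.intervalIntegrable (by fun_prop) _ _
  have hftc := intervalIntegral.integral_eq_sub_of_hasDerivAt (a := 0) (b := R)
    (fun r _ ↦ hasDerivAt_pow_mul_gaussian n r) (((hint _).const_mul _).sub (hint _))
  rw [intervalIntegral.integral_sub ((hint _).const_mul _) (hint _),
    intervalIntegral.integral_const_mul, zero_pow hn.ne', zero_mul, sub_zero] at hftc
  rw [← intervalIntegral.integral_of_le hR, ← intervalIntegral.integral_of_le hR, ← hftc]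
  ring

theorem chiCDF_add_two {n : ℕ} (hn : 0 < n) {R : ℝ} (hR : 0 ≤ R) :
    chiCDF (n + 2) R = chiCDF n R - R ^ n * exp (-R ^ 2 / 2) / (n * chiNormalization n) := by
  have hpos := chiNormalization_pos hn
  rw [chiCDF, chiCDF, chiNormalization_add_two hn, show n + 2 - 1 = n + 1 from rfl,
    integral_pow_add_one_mul_gaussian hn hR]
  field_simp

theorem fwdDiff_iter_three_chiCDF {n : ℕ} (hn : 0 < n) {R : ℝ} (hR : 0 ≤ R) :
    (Δ_[1])^[3] (fun j : ℕ ↦ chiCDF (n + 2 * j) R) 0 =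
      (-(1 / n) + 2 * R ^ 2 / (n * (n + 2)) - R ^ 4 / (n * (n + 2) * (n + 4))) *
        (R ^ n * exp (-R ^ 2 / 2) / chiNormalization n) := by
  have hdiff : Δ_[1] (fun j : ℕ ↦ chiCDF (n + 2 * j) R) = fun j ↦
      -(R ^ (n + 2 * j) * exp (-R ^ 2 / 2) /
        ((n + 2 * j : ℕ) * chiNormalization (n + 2 * j))) := by
    ext j
    rw [fwdDiff, mul_add_one, ← add_assoc, chiCDF_add_two (by omega) hR, sub_sub_cancel_left]
  have hpos := chiNormalization_pos hn
  have hnorm₂ := chiNormalization_add_two hn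
  have hnorm₄ := chiNormalization_add_two (n := n + 2) (by omega)
  simp only [iterate_succ, iterate_zero, comp_apply, id_eq, hdiff, fwdDiff, zero_add, mul_zero,
    add_zero, mul_one, one_add_one_eq_two, Nat.reduceMul]
  rw [hnorm₄, hnorm₂]
  push_cast
  field_simp
  ring

theorem fwdDiff_iter_three_chiCDF_sqrt {n : ℕ} (hn : 0 < n) {u : ℝ} (hu : 0 < u) :
    (Δ_[1])^[3] (fun j : ℕ ↦ chiCDF (n + 2 * j) (√u)) 0 =
      (-(2 * u / n) + 4 * u ^ 2 / (n * (n + 2)) - 2 * u ^ 3 / (n * (n + 2) * (n + 4))) *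
        (u ^ ((n : ℝ) / 2 - 1) * exp (-u / 2) / (2 ^ ((n : ℝ) / 2) * Gamma ((n : ℝ) / 2))) := by
  have hpow : √u ^ n = u ^ ((n : ℝ) / 2 - 1) * u := by
    rw [← rpow_natCast, ← rpow_div_two_eq_sqrt _ hu.le, ← rpow_add_one hu.ne', sub_add_cancel]
  have hpow₄ : √u ^ 4 = u ^ 2 := by rw [pow_mul (√u) 2 2, sq_sqrt hu.le]
  rw [fwdDiff_iter_three_chiCDF hn (sqrt_nonneg u), chiNormalization_eq hn, hpow, hpow₄,
    sq_sqrt hu.le, rpow_sub_one two_ne_zero]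
  field_simp
  ring

end Chi

section PolarCoordinates

variable {E : Type*} [NormedAddCommGroup E] [NormedSpace ℝ E] [FiniteDimensional ℝ E]
  [MeasurableSpace E] [BorelSpace E] [Nontrivial E] (μ : Measure E) [μ.IsAddHaarMeasure]

theorem integral_volumeIoiPow_s12 {F : Type*} [NormedAddCommGroup F] [NormedSpace ℝ F] (n : ℕ)
    (f : ℝ → F) :
    ∫ r : Ioi (0 : ℝ), f r ∂(.volumeIoiPow n) = ∫ r in Ioi (0 : ℝ), r ^ n • f r := by
  simp only [Measure.volumeIoiPow, ENNReal.ofReal]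
  rw [integral_withDensity_eq_integral_smul (measurable_subtype_coe.pow_const _).real_toNNReal,
    integral_subtype_comap measurableSet_Ioi fun r ↦ (r ^ n).toNNReal • f r]
  refine setIntegral_congr_fun measurableSet_Ioi fun r hr ↦ ?_
  simp only [NNReal.smul_def, coe_toNNReal _ (pow_nonneg (le_of_lt hr) n)]

theorem integral_homogeneous_mul_fun_norm_addHaar {p : E → ℝ} {d : ℕ}
    (hp : ∀ r > 0, ∀ x, p (r • x) = r ^ d * p x) (g : ℝ → ℝ) :
    ∫ x, p x * g ‖x‖ ∂μ = (∫ x, p x.1 ∂μ.toSphere) *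
      ∫ r in Ioi (0 : ℝ), r ^ (Module.finrank ℝ E + d - 1) * g r := by
  calc ∫ x, p x * g ‖x‖ ∂μ
    _ = ∫ x : ({0}ᶜ : Set E), p x * g ‖x.1‖ ∂(μ.comap (↑)) := by
      rw [integral_subtype_comap (measurableSet_singleton _).compl fun x ↦ p x * g ‖x‖,
        restrict_compl_singleton]
    _ = ∫ x, p x.1 * (x.2.1 ^ d * g x.2)
          ∂(μ.toSphere.prod (.volumeIoiPow (Module.finrank ℝ E - 1))) := by
      rw [← μ.measurePreserving_homeomorphUnitSphereProd.integral_comp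
        (Homeomorph.measurableEmbedding _)]
      refine integral_congr_ae (.of_forall fun x ↦ ?_)
      have hx : 0 < ‖x.1‖ := norm_pos_iff.2 x.2
      have hpx : p x.1 = ‖x.1‖ ^ d * p (‖x.1‖⁻¹ • x.1) := by rw [← hp _ hx, smul_inv_smul₀ hx.ne']
      simp only [hpx, homeomorphUnitSphereProd_apply_fst_coe,
        homeomorphUnitSphereProd_apply_snd_coe]
      ring
    _ = (∫ x, p x.1 ∂μ.toSphere) *
          ∫ r : Ioi (0 : ℝ), r.1 ^ d * g r ∂(.volumeIoiPow (Module.finrank ℝ E - 1)) :=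
      integral_prod_mul (fun x : Metric.sphere (0 : E) 1 ↦ p x)
        fun r : Ioi (0 : ℝ) ↦ r.1 ^ d * g r
    _ = _ := by
      have hexp : Module.finrank ℝ E + d - 1 = Module.finrank ℝ E - 1 + d :=
        Nat.sub_add_comm Module.finrank_pos
      simp only [integral_volumeIoiPow_s12 _ fun r ↦ r ^ d * g r, hexp, pow_add, mul_assoc,
        smul_eq_mul]

theorem setIntegral_closedBall_homogeneous_mul_gaussian {p : E → ℝ} {d : ℕ}
    (hp : ∀ r > 0, ∀ x, p (r • x) = r ^ d * p x) (R : ℝ) :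
    ∫ x in Metric.closedBall 0 R, p x * exp (-‖x‖ ^ 2 / 2) ∂μ =
      chiCDF (Module.finrank ℝ E + d) R * ∫ x, p x * exp (-‖x‖ ^ 2 / 2) ∂μ := by
  have hball : (Metric.closedBall (0 : E) R).indicator (fun x ↦ p x * exp (-‖x‖ ^ 2 / 2)) =
      fun x ↦ p x * (Iic R).indicator (fun r ↦ exp (-r ^ 2 / 2)) ‖x‖ := by
    ext x
    by_cases hx : ‖x‖ ≤ R <;> simp [hx]
  have hradial (n : ℕ) : ∫ r in Ioi (0 : ℝ), r ^ n * (Iic R).indicator (fun r ↦ exp (-r ^ 2 / 2)) r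
      = ∫ r in Ioc 0 R, r ^ n * exp (-r ^ 2 / 2) := by
    simp_rw [← Ioi_inter_Iic, ← setIntegral_indicator measurableSet_Iic, Set.indicator_apply,
      mul_ite, mul_zero]
  have hpos := chiNormalization_pos (Nat.add_pos_left (Module.finrank_pos (R := ℝ) (M := E)) d)
  rw [← integral_indicator Metric.isClosed_closedBall.measurableSet, hball,
    integral_homogeneous_mul_fun_norm_addHaar μ hp,
    integral_homogeneous_mul_fun_norm_addHaar μ hp fun r ↦ exp (-r ^ 2 / 2), hradial, chiCDF,
    ← chiNormalization]
  field_simp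

end PolarCoordinates

section TruncatedMoments

theorem integral_gaussian_one_half : ∫ x : ℝ, exp (-x ^ 2 / 2) = √(2 * π) := by
  have h := integral_gaussian (1 / 2)
  rw [div_div_eq_mul_div, div_one, mul_comm π] at h
  rw [← h]
  simp only [neg_mul, one_div, neg_div, inv_mul_eq_div]

theorem integral_sq_mul_gaussian : ∫ x : ℝ, x ^ 2 * exp (-x ^ 2 / 2) = √(2 * π) := by
  have h₀ := integral_comp_abs (f := fun x ↦ exp (-x ^ 2 / 2))
  have h₂ := integral_comp_abs (f := fun x ↦ x ^ 2 * exp (-x ^ 2 / 2))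
  simp only [sq_abs] at h₀ h₂
  have hchi := chiNormalization_add_two one_pos
  simp only [chiNormalization, Nat.reduceAdd, Nat.reduceSub, Nat.cast_one, pow_zero, one_mul]
    at hchi
  rw [h₂, hchi, ← h₀, integral_gaussian_one_half]

variable {ι : Type*} [Fintype ι]

theorem integral_prod_sq_mul_gaussian (s : Finset ι) :
    ∫ x : EuclideanSpace ℝ ι, (∏ i ∈ s, x i ^ 2) * exp (-‖x‖ ^ 2 / 2) =
      √(2 * π) ^ Fintype.card ι := by
  classical
  have hone (i : ι) : ∫ x : ℝ, (if i ∈ s then x ^ 2 else 1) * exp (-x ^ 2 / 2) = √(2 * π) := by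
    split_ifs
    · exact integral_sq_mul_gaussian
    · simpa only [one_mul] using integral_gaussian_one_half
  have hprod (z : ι → ℝ) : (∏ i ∈ s, z i ^ 2) * exp (-‖WithLp.toLp 2 z‖ ^ 2 / 2) =
      ∏ i, (if i ∈ s then z i ^ 2 else 1) * exp (-z i ^ 2 / 2) := by
    rw [Finset.prod_mul_distrib, prod_ite_mem, Finset.univ_inter, ← exp_sum, ← Finset.sum_div,
      Finset.sum_neg_distrib, EuclideanSpace.real_norm_sq_eq]
  rw [← (PiLp.volume_preserving_toLp ι).integral_comp
    (MeasurableEquiv.toLp 2 _).measurableEmbedding]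
  simp_rw [hprod]
  rw [integral_fintype_prod_volume_eq_prod
    fun i (x : ℝ) ↦ (if i ∈ s then x ^ 2 else 1) * exp (-x ^ 2 / 2)]
  simp only [hone, prod_const, card_univ]

theorem setIntegral_closedBall_prod_sq_mul_gaussian [Nonempty ι] (s : Finset ι) (R : ℝ) :
    ∫ x in Metric.closedBall (0 : EuclideanSpace ℝ ι) R, (∏ i ∈ s, x i ^ 2) * exp (-‖x‖ ^ 2 / 2) =
      √(2 * π) ^ Fintype.card ι * chiCDF (Fintype.card ι + 2 * #s) R := by
  have hp (r : ℝ) (_ : r > 0) (x : EuclideanSpace ℝ ι) :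
      ∏ i ∈ s, (r • x) i ^ 2 = r ^ (2 * #s) * ∏ i ∈ s, x i ^ 2 := by
    simp only [PiLp.smul_apply, smul_eq_mul, mul_pow, Finset.prod_mul_distrib, prod_const, pow_mul]
  rw [setIntegral_closedBall_homogeneous_mul_gaussian volume hp, integral_prod_sq_mul_gaussian,
    finrank_euclideanSpace, mul_comm]

theorem setIntegral_closedBall_prod_sq_sub_one_mul_gaussian [Nonempty ι] (s : Finset ι) (R : ℝ) :
    ∫ x in Metric.closedBall (0 : EuclideanSpace ℝ ι) R,
        (∏ i ∈ s, (x i ^ 2 - 1)) * exp (-‖x‖ ^ 2 / 2) =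
      √(2 * π) ^ Fintype.card ι *
        (Δ_[1])^[#s] (fun j : ℕ ↦ chiCDF (Fintype.card ι + 2 * j) R) 0 := by
  classical
  have hexpand (x : EuclideanSpace ℝ ι) : (∏ i ∈ s, (x i ^ 2 - 1)) * exp (-‖x‖ ^ 2 / 2) =
      ∑ t ∈ s.powerset, (-1) ^ (#s - #t) * ((∏ i ∈ t, x i ^ 2) * exp (-‖x‖ ^ 2 / 2)) := by
    simp only [sub_eq_add_neg, prod_add, prod_const, Finset.sum_mul]
    refine Finset.sum_congr rfl fun t ht ↦ ?_
    rw [card_sdiff_of_subset (mem_powerset.1 ht)]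
    ring
  have hint (t : Finset ι) : IntegrableOn
      (fun x : EuclideanSpace ℝ ι ↦ (∏ i ∈ t, x i ^ 2) * exp (-‖x‖ ^ 2 / 2))
      (Metric.closedBall 0 R) :=
    (Continuous.continuousOn (by fun_prop)).integrableOn_compact (isCompact_closedBall 0 R)
  simp_rw [hexpand]
  rw [integral_finsetSum _ fun t _ ↦ (hint t).const_mul _]
  simp_rw [integral_const_mul, setIntegral_closedBall_prod_sq_mul_gaussian]
  rw [sum_powerset_apply_card fun j ↦
      (-1) ^ (#s - j) * (√(2 * π) ^ Fintype.card ι * chiCDF (Fintype.card ι + 2 * j) R),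
    fwdDiff_iter_eq_sum_shift, Finset.mul_sum]
  refine Finset.sum_congr rfl fun j _ ↦ ?_
  simp only [nsmul_eq_mul, zsmul_eq_mul, smul_eq_mul, zero_add, mul_one]
  push_cast
  ring

theorem setIntegral_sum_sq_le {F : Type*} [NormedAddCommGroup F] [NormedSpace ℝ F]
    (f : (ι → ℝ) → F) {u : ℝ} (hu : 0 ≤ u) :
    ∫ z in {z : ι → ℝ | ∑ i, z i ^ 2 ≤ u}, f z =
      ∫ x in Metric.closedBall (0 : EuclideanSpace ℝ ι) (√u), f x.ofLp := by
  have hball : {z : ι → ℝ | ∑ i, z i ^ 2 ≤ u} =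
      WithLp.toLp 2 ⁻¹' Metric.closedBall (0 : EuclideanSpace ℝ ι) (√u) := by
    ext z
    simp [EuclideanSpace.norm_eq, sqrt_le_sqrt_iff hu]
  rw [hball, ← (PiLp.volume_preserving_toLp ι).setIntegral_preimage_emb
    (MeasurableEquiv.toLp 2 _).measurableEmbedding]

end TruncatedMoments

section PartialDerivatives

variable {ι : Type*} [DecidableEq ι]

/-- The `n`-th partial derivative of `f` in the coordinate `i`. It is the one-variable derivative
along the line through `z` parallel to the `i`-th axis, so that composing these operators gives
nested one-variable derivatives. -/
noncomputable def iteratedPartialDeriv (n : ℕ) (i : ι) (f : (ι → ℝ) → ℝ) (z : ι → ℝ) : ℝ :=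
  iteratedDeriv n (fun t ↦ f (update z i t)) (z i)

theorem aeval_hermite_two (x : ℝ) : aeval x (hermite 2) = x ^ 2 - 1 := by
  simp [hermite_succ, sq]

variable [Fintype ι]

theorem iteratedPartialDeriv_mul_gaussian (n : ℕ) (i : ι) {h : (ι → ℝ) → ℝ}
    (hh : ∀ z t, h (update z i t) = h z) :
    iteratedPartialDeriv n i (fun z ↦ h z * exp (-(∑ j, z j ^ 2) / 2)) =
      fun z ↦ h z * ((-1) ^ n * aeval (z i) (hermite n)) * exp (-(∑ j, z j ^ 2) / 2) := by
  ext z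
  set c := exp (-(∑ j ∈ univ.erase i, z j ^ 2) / 2)
  have hsplit (t : ℝ) :
      exp (-(∑ j, update z i t j ^ 2) / 2) = c * exp (-(t ^ 2 / 2)) := by
    have hsum : ∑ j, update z i t j ^ 2 = t ^ 2 + ∑ j ∈ univ.erase i, z j ^ 2 := by
      rw [← Finset.add_sum_erase _ _ (Finset.mem_univ i), update_self]
      congr 1
      exact Finset.sum_congr rfl fun j hj ↦ by rw [update_of_ne (Finset.ne_of_mem_erase hj)]
    rw [hsum, ← exp_add]
    ring_nf
  have hz := hsplit (z i)
  rw [update_eq_self] at hz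
  simp only [iteratedPartialDeriv, hh, hsplit, hz, ← mul_assoc]
  rw [iteratedDeriv_const_mul_field, iteratedDeriv_eq_iterate,
    deriv_gaussian_eq_hermite_mul_gaussian]
  ring

theorem foldr_iteratedPartialDeriv_gaussian (n : ℕ) {l : List ι} (hl : l.Nodup) :
    l.foldr (iteratedPartialDeriv n) (fun z ↦ exp (-(∑ j, z j ^ 2) / 2)) =
      fun z ↦ (∏ i ∈ l.toFinset, (-1) ^ n * aeval (z i) (hermite n)) *
        exp (-(∑ j, z j ^ 2) / 2) := by
  induction l with
  | nil => simp
  | cons a l ih =>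
    obtain ⟨hal, hl⟩ := List.nodup_cons.1 hl
    rw [← List.mem_toFinset] at hal
    have hindep (z : ι → ℝ) (t : ℝ) :
        ∏ i ∈ l.toFinset, (-1) ^ n * aeval (update z a t i) (hermite n) =
          ∏ i ∈ l.toFinset, (-1) ^ n * aeval (z i) (hermite n) :=
      Finset.prod_congr rfl fun i hi ↦ by rw [update_of_ne (ne_of_mem_of_not_mem hi hal)]
    rw [List.foldr_cons, ih hl, iteratedPartialDeriv_mul_gaussian n a hindep]
    simp only [List.toFinset_cons, prod_insert hal, mul_comm]

theorem setIntegral_foldr_iteratedPartialDeriv_two_gaussian [Nonempty ι] {l : List ι}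
    (hl : l.Nodup) {u : ℝ} (hu : 0 ≤ u) :
    ∫ z in {z : ι → ℝ | ∑ i, z i ^ 2 ≤ u},
        l.foldr (iteratedPartialDeriv 2) (fun z ↦ exp (-(∑ i, z i ^ 2) / 2)) z =
      √(2 * π) ^ Fintype.card ι *
        (Δ_[1])^[l.length] (fun j : ℕ ↦ chiCDF (Fintype.card ι + 2 * j) (√u)) 0 := by
  rw [setIntegral_sum_sq_le _ hu, foldr_iteratedPartialDeriv_gaussian 2 hl,
    ← List.toFinset_card_of_nodup hl, ← setIntegral_closedBall_prod_sq_sub_one_mul_gaussian]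
  simp only [neg_one_sq, one_mul, aeval_hermite_two, EuclideanSpace.real_norm_sq_eq]

end PartialDerivatives

theorem stmt12 (k : ℕ) (hk : 3 ≤ k) (u : ℝ) (hu : 0 < u) :
    (2 * Real.pi) ^ (-(k : ℝ) / 2) *
        ∫ z in {z : Fin k → ℝ | ∑ i, z i ^ 2 ≤ u},
          iteratedDeriv 2
            (fun w => iteratedDeriv 2
              (fun s => iteratedDeriv 2
                (fun t => Real.exp
                  (-(∑ i, Function.update (Function.update (Function.update z ⟨2, by omega⟩ w) ⟨1, by omega⟩ s) ⟨0, by omega⟩ t i ^ 2) / 2))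
                (z ⟨0, by omega⟩))
              (z ⟨1, by omega⟩))
            (z ⟨2, by omega⟩) =
      (-(2 * u / k) + 4 * u ^ 2 / (k * (k + 2)) -
          2 * u ^ 3 / (k * (k + 2) * (k + 4))) *
        (u ^ ((k : ℝ) / 2 - 1) * Real.exp (-u / 2) /
          (2 ^ ((k : ℝ) / 2) * Real.Gamma ((k : ℝ) / 2))) := by
  have hk₀ : 0 < k := by omega
  have : Nonempty (Fin k) := ⟨⟨0, hk₀⟩⟩
  let l : List (Fin k) := [⟨2, by omega⟩, ⟨1, by omega⟩, ⟨0, by omega⟩]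
  have hl : l.Nodup := by simp [l]
  have hpi : (2 * π) ^ (-(k : ℝ) / 2) * √(2 * π) ^ k = 1 := by
    rw [← rpow_natCast, ← rpow_div_two_eq_sqrt _ (by positivity), ← rpow_add (by positivity),
      neg_div, neg_add_cancel, rpow_zero]
  calc
    _ = (2 * π) ^ (-(k : ℝ) / 2) * ∫ z in {z : Fin k → ℝ | ∑ i, z i ^ 2 ≤ u},
          l.foldr (iteratedPartialDeriv 2) (fun z ↦ exp (-(∑ i, z i ^ 2) / 2)) z := by
      simp [l, iteratedPartialDeriv]
    _ = (2 * π) ^ (-(k : ℝ) / 2) * √(2 * π) ^ k *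
          (Δ_[1])^[3] (fun j : ℕ ↦ chiCDF (k + 2 * j) (√u)) 0 := by
      rw [setIntegral_foldr_iteratedPartialDeriv_two_gaussian hl hu.le, Fintype.card_fin, mul_assoc]
      rfl
    _ = _ := by rw [hpi, one_mul, fwdDiff_iter_three_chiCDF_sqrt hk₀ hu]
end
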